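/- Let c₀, c₁, γ₀ ∈ ℝ with 1 < c₀ ≤ γ₀ ≤ c₁. Set C := 1/c₁² and ε := (c₀ − 1)²/(2c₁²). Then ε < 1/2, and for every s ≥ 0 one has √(1+s) − (1+s)^{−1/2} + C (√(1+s) − γ₀)² (1+s)^{−1/2} ≥ ε ( √(1+s) + 1 ). -/

import Mathlib

/-- The principal-symbol inequality of Proposition 4.1: for `1 < c₀ ≤ γ₀ ≤ c₁`,
`C = 1/c₁²`, `ε = (c₀−1)²/(2c₁²)`, one has `ε < 1/2` and for all `s ≥ 0`
`√(1+s) − (1+s)^{-1/2} + C(√(1+s) − γ₀)²(1+s)^{-1/2} ≥ ε(√(1+s) + 1)`. -/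
theorem principal_symbol_inequality (c₀ c₁ γ₀ : ℝ)
    (h₀ : 1 < c₀) (h₁ : c₀ ≤ γ₀) (h₂ : γ₀ ≤ c₁)
    (C ε : ℝ) (hC : C = 1 / c₁ ^ 2) (hε : ε = (c₀ - 1) ^ 2 / (2 * c₁ ^ 2)) :
    ε < 1 / 2 ∧
    ∀ s : ℝ, 0 ≤ s →
      Real.sqrt (1 + s) - (Real.sqrt (1 + s))⁻¹
          + C * (Real.sqrt (1 + s) - γ₀) ^ 2 * (Real.sqrt (1 + s))⁻¹
        ≥ ε * (Real.sqrt (1 + s) + 1) := by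
  have hc : 0 < c₁ := by linarith
  have hK : 0 < c₁ ^ 2 := by positivity
  constructor
  · rw [hε, div_lt_iff₀ (by positivity)]
    nlinarith
  · intro s hs
    have ht : 1 ≤ Real.sqrt (1 + s) := by
      rw [Real.one_le_sqrt]; linarith
    generalize Real.sqrt (1 + s) = t at ht
    have htp : 0 < t := by linarith
    obtain ⟨u, rfl⟩ : ∃ u, t = 1 + u := ⟨t - 1, by ring⟩
    obtain ⟨b, rfl⟩ : ∃ b, γ₀ = 1 + b := ⟨γ₀ - 1, by ring⟩
    have hu : 0 ≤ u := by linarith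
    have hb : 0 ≤ b := by linarith
    have hKb : (1 + b) ^ 2 ≤ c₁ ^ 2 := pow_le_pow_left₀ (by linarith) h₂ 2
    have hab : (c₀ - 1) ^ 2 ≤ b ^ 2 := pow_le_pow_left₀ (by linarith) (by linarith) 2
    have h3 : (1 + b) ^ 2 * (2 * u + u ^ 2) ≤ c₁ ^ 2 * (2 * u + u ^ 2) :=
      mul_le_mul_of_nonneg_right hKb (by positivity)
    have h4 : (c₀ - 1) ^ 2 * (2 + 3 * u + u ^ 2) ≤ b ^ 2 * (2 + 3 * u + u ^ 2) :=
      mul_le_mul_of_nonneg_right hab (by positivity)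
    have h5 : 0 ≤ u * (2 + 2 * b + b ^ 2 / 2) + u ^ 2 * (2 + 2 * b + b ^ 2 / 2) := by
      positivity
    have key : 0 ≤ c₁ ^ 2 * (2 * u + u ^ 2) + (u - b) ^ 2
        - (c₀ - 1) ^ 2 * (2 + 3 * u + u ^ 2) / 2 := by
      linarith
    have e : (1 + u) - (1 + u)⁻¹ + C * ((1 + u) - (1 + b)) ^ 2 * (1 + u)⁻¹
        - ε * ((1 + u) + 1) = (c₁ ^ 2 * (2 * u + u ^ 2) + (u - b) ^ 2
        - (c₀ - 1) ^ 2 * (2 + 3 * u + u ^ 2) / 2) / (c₁ ^ 2 * (1 + u)) := by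
      rw [hC, hε]
      field_simp
      ring
    have := div_nonneg key (by positivity : 0 ≤ c₁ ^ 2 * (1 + u))
    linarith
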